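/- K(π,1) arrangements have no gap in the consistency filtration. Precisely: let α_1,…,α_n be nonzero linear forms on ℝ^ℓ with ⋂_{i=1}^n ker α_i = {0}. If the complexified complement M(A) is aspherical, i.e., π_k(M(A), x_0) is trivial for all k ≥ 2, then Σ_2 = Σ_3 = ⋯ = Σ_ℓ, where Σ_m is the set of sign vectors ε ∈ {+1,−1}^n such that h(ε) is consistent at every X ∈ L(A) with codim X ≤ m. -/

import Mathlib

noncomputable section

/-- Real vector space `ℝ^ℓ`. -/
abbrev Vsp (ℓ : ℕ) : Type := EuclideanSpace ℝ (Fin ℓ)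

/-- The intersection `X = ⋂ i ∈ I, ker (α i)` as a submodule. -/
def interKer {ℓ n : ℕ} (α : Fin n → (Vsp ℓ →ₗ[ℝ] ℝ)) (I : Finset (Fin n)) :
    Submodule ℝ (Vsp ℓ) :=
  ⨅ i ∈ I, LinearMap.ker (α i)

/-- The system of half-spaces determined by `ε` is consistent at the intersection
`X = ⋂ i ∈ I, ker (α i)`: the intersection of the half-spaces of all hyperplanes
containing `X` is nonempty. -/
def ConsistentAt {ℓ n : ℕ} (α : Fin n → (Vsp ℓ →ₗ[ℝ] ℝ)) (ε : Fin n → ℝ)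
    (I : Finset (Fin n)) : Prop :=
  {x : Vsp ℓ | ∀ j : Fin n, interKer α I ≤ LinearMap.ker (α j) →
      0 < ε j * α j x}.Nonempty

/-- `Σ_m`: the set of sign vectors whose system of half-spaces is consistent at every
intersection of codimension at most `m`. -/
def SigmaFilt {n : ℕ} (ℓ : ℕ) (α : Fin n → (Vsp ℓ →ₗ[ℝ] ℝ)) (m : ℕ) :
    Set (Fin n → ℝ) :=
  {ε | (∀ i, ε i = 1 ∨ ε i = -1) ∧ ∀ I : Finset (Fin n),
    ℓ - Module.finrank ℝ (interKer α I) ≤ m → ConsistentAt α ε I}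

/-- The point `x + √-1 · v` of `ℂ^ℓ` determined by the real vectors `x, v`. -/
def cplx {ℓ : ℕ} (x v : Vsp ℓ) : Fin ℓ → ℂ :=
  fun j => (x j : ℂ) + Complex.I * (v j : ℂ)

/-- The `ℂ`-linear extension of a real linear form, evaluated at `z ∈ ℂ^ℓ`. -/
def cLin {ℓ : ℕ} (α : Vsp ℓ →ₗ[ℝ] ℝ) (z : Fin ℓ → ℂ) : ℂ :=
  (α (WithLp.toLp 2 (fun j => (z j).re)) : ℂ) + Complex.I * (α (WithLp.toLp 2 (fun j => (z j).im)) : ℂ)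

/-- The complexified complement `M(A) ⊆ ℂ^ℓ`. -/
def MA {ℓ n : ℕ} (α : Fin n → (Vsp ℓ →ₗ[ℝ] ℝ)) : Set (Fin ℓ → ℂ) :=
  {z | ∀ i, cLin (α i) z ≠ 0}

/-!
Let `ε` be consistent at every flat of codimension at most `k` and let `X` be a flat of codimension
`k + 1`. Write `S^k` for the unit sphere of a complement of `X`. For `u ∈ S^k` the hyperplanes
containing both `X` and `u` cut out a flat of codimension at most `k`, so there is a vector `v u`,
continuous in `u`, with `0 < εⱼ αⱼ (v u)` whenever `αⱼ` vanishes on `X` and at `u`. With a generic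
base point `p ∈ X` this gives a map `S^k → M(A)`, `u ↦ p + u + i v u`.

A null-homotopy of that map would lift the arguments of all the numbers `εⱼ αⱼ (a + i b)`, for `αⱼ`
vanishing on `X`, along the homotopy. Rotating `a + i b` by the least of these arguments makes its
real part nonzero modulo `X` throughout. If `ε` is inconsistent at `X`, then at time `0` the least
argument lies in `(-π/2, π/2)`, as otherwise `-u + η v u` for small `η > 0` would be a point of the
forbidden chamber. So there the rotation can be undone without the real part meeting `X`, and the
identity of `S^k` would extend to a nonvanishing map of the ball.

That this is impossible is Brouwer's theorem, proved by the Milnor–Rogers volume argument.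
-/

section Degree

open MeasureTheory Metric Set Filter Topology
open scoped NNReal

lemma exists_polynomial_eval_eq_det_one_add_smul {R M : Type*} [CommRing R] [Nontrivial R]
    [AddCommGroup M] [Module R M] [Module.Free R M] [Module.Finite R M] (A : M →ₗ[R] M) :
    ∃ p : Polynomial R, p.natDegree ≤ Module.finrank R M ∧
      ∀ t, p.eval t = LinearMap.det (1 + t • A) := by
  classical
  let b := Module.Free.chooseBasis R M
  let B := LinearMap.toMatrix b b A
  refine ⟨((Polynomial.X : Polynomial R) • B.map Polynomial.C +
    (1 : Matrix _ _ R).map Polynomial.C).det, ?_, fun t => ?_⟩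
  · rw [Module.finrank_eq_card_chooseBasisIndex]
    exact Polynomial.natDegree_det_X_add_C_le B 1
  · have hmatrix : LinearMap.toMatrix b b (1 + t • A) = t • B + 1 := by
      rw [map_add, LinearMap.toMatrix_one, map_smul, add_comm]
    rw [← LinearMap.det_toMatrix b, hmatrix, ← Polynomial.coe_evalRingHom, RingHom.map_det]
    congr 1
    ext i j
    simp only [RingHom.mapMatrix_apply, Matrix.map_apply, Matrix.add_apply, Matrix.smul_apply,
      smul_eq_mul, Polynomial.coe_evalRingHom, Polynomial.eval_add, Polynomial.eval_mul,
      Polynomial.eval_X, Polynomial.eval_C]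

lemma integral_eval_eq_of_infinite {X : Type*} [MeasurableSpace X] {μ : Measure X}
    {p : X → Polynomial ℝ} {d : ℕ} (hp : ∀ x, (p x).natDegree ≤ d) {T : Set ℝ} (hT : T.Infinite)
    (hint : ∀ t ∈ T, Integrable (fun x => (p x).eval t) μ) {c : ℝ}
    (hc : ∀ t ∈ T, ∫ x, (p x).eval t ∂μ = c) (t : ℝ) : ∫ x, (p x).eval t ∂μ = c := by
  obtain ⟨s, hsT, hcard⟩ := hT.exists_subset_card_eq (d + 1)
  have hs : s.Nonempty := Finset.card_pos.1 (by lia)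
  let w : ℝ → ℝ := fun i => (Lagrange.basis s id i).eval t
  have hw : ∑ i ∈ s, w i = 1 := by
    rw [← Polynomial.eval_finsetSum, Lagrange.sum_basis (injOn_id _) hs, Polynomial.eval_one]
  have hinterp (x : X) : (p x).eval t = ∑ i ∈ s, (p x).eval i * w i := by
    have hdeg : (p x).degree < s.card :=
      Polynomial.degree_le_natDegree.trans_lt
        (by rw [hcard]; exact_mod_cast Nat.lt_succ_of_le (hp x))
    conv_lhs => rw [Lagrange.eq_interpolate (injOn_id (s : Set ℝ)) hdeg]
    simp only [Lagrange.interpolate_apply, Polynomial.eval_finsetSum, Polynomial.eval_mul,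
      Polynomial.eval_C, id_eq, w]
  calc ∫ x, (p x).eval t ∂μ = ∑ i ∈ s, ∫ x, (p x).eval i * w i ∂μ := by
        simp_rw [hinterp]
        exact integral_finsetSum _ fun i hi => (hint i (hsT hi)).mul_const _
    _ = ∑ i ∈ s, c * w i :=
        Finset.sum_congr rfl fun i hi => by rw [integral_mul_const, hc i (hsT hi)]
    _ = c := by rw [← Finset.mul_sum, hw, mul_one]

lemma inter_frontier_nonempty_of_isPreconnected {X : Type*} [TopologicalSpace X] {s t : Set X}
    (ht : IsPreconnected t) {x y : X} (hxt : x ∈ t) (hxs : x ∈ s) (hyt : y ∈ t) (hys : y ∉ s) :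
    (t ∩ frontier s).Nonempty := by
  rw [frontier_eq_closure_inter_closure]
  refine isPreconnected_closed_iff.1 ht _ _ isClosed_closure isClosed_closure (fun z _ => ?_)
    ⟨x, hxt, subset_closure hxs⟩ ⟨y, hyt, subset_closure hys⟩
  exact (em (z ∈ s)).imp (fun hz => subset_closure hz) fun hz => subset_closure hz

lemma bijective_id_add_of_lipschitzWith {E : Type*} [NormedAddCommGroup E] [CompleteSpace E]
    {g : E → E} {K : ℝ≥0} (hK : K < 1) (hg : LipschitzWith K g) :
    Function.Bijective fun x => x + g x := by
  refine Function.bijective_iff_existsUnique _ |>.2 fun y => ?_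
  have hcontr : ContractingWith K fun x => y - g x :=
    ⟨hK, by simpa only [zero_add] using (LipschitzWith.const y).sub hg⟩
  refine ⟨ContractingWith.fixedPoint _ hcontr, ?_, fun x hx => hcontr.fixedPoint_unique ?_⟩
  · exact (eq_sub_iff_add_eq.1 hcontr.fixedPoint_isFixedPt.symm)
  · exact (eq_sub_of_add_eq hx).symm

section Normed

variable {E : Type*} [NormedAddCommGroup E] [NormedSpace ℝ E]

lemma det_one_add_pos_of_norm_lt_one [FiniteDimensional ℝ E] {B : E →L[ℝ] E} (hB : ‖B‖ < 1) :
    0 < (1 + B).det := by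
  have : CompleteSpace E := FiniteDimensional.complete ℝ E
  have hne : ∀ s ∈ Icc (0 : ℝ) 1, (1 + s • B).det ≠ 0 := by
    intro s hs
    have hnorm : ‖-(s • B)‖ < 1 := by
      rw [norm_neg, norm_smul, Real.norm_of_nonneg hs.1]
      exact (mul_le_of_le_one_left (norm_nonneg B) hs.2).trans_lt hB
    have hunit : IsUnit (1 + s • B) := by
      simpa only [sub_neg_eq_add] using isUnit_one_sub_of_norm_lt_one hnorm
    exact (LinearMap.isUnit_iff_isUnit_det _ |>.1
      (hunit.map ContinuousLinearMap.toLinearMapRingHom)).ne_zero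
  have hcont : Continuous fun s : ℝ => (1 + s • B).det :=
    ContinuousLinearMap.continuous_det.comp (by fun_prop)
  by_contra! hneg
  obtain ⟨s, hs, hs0⟩ := intermediate_value_Icc' zero_le_one hcont.continuousOn
    (show (0 : ℝ) ∈ Icc _ _ from ⟨by simpa using hneg, by simp [ContinuousLinearMap.det]⟩)
  exact hne s hs hs0

lemma lipschitzWith_indicator_of_eqOn_frontier {F : Type*} [NormedAddCommGroup F] {g : E → F}
    {s : Set E} {K : ℝ≥0} (hg : LipschitzOnWith K g (closure s))
    (hzero : EqOn g 0 (frontier s)) : LipschitzWith K (s.indicator g) := by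
  have hcross {x y : E} (hx : x ∈ s) (hy : y ∉ s) : dist (g x) 0 ≤ K * dist x y := by
    obtain ⟨z, hzseg, hz⟩ := inter_frontier_nonempty_of_isPreconnected
      (convex_segment x y).isPreconnected (left_mem_segment ℝ x y) hx (right_mem_segment ℝ x y) hy
    calc dist (g x) 0 = dist (g x) (g z) := by rw [hzero hz, Pi.zero_apply]
      _ ≤ K * dist x z := hg.dist_le_mul x (subset_closure hx) z (frontier_subset_closure hz)
      _ ≤ K * dist x y := by
        gcongr
        linarith [dist_add_dist_of_mem_segment hzseg, dist_nonneg (x := z) (y := y)]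
  refine LipschitzWith.of_dist_le_mul fun x y => ?_
  by_cases hx : x ∈ s <;> by_cases hy : y ∈ s
  · simpa only [indicator_of_mem hx, indicator_of_mem hy] using
      hg.dist_le_mul x (subset_closure hx) y (subset_closure hy)
  · simpa only [indicator_of_mem hx, indicator_of_notMem hy] using hcross hx hy
  · simpa only [indicator_of_notMem hx, indicator_of_mem hy, dist_comm] using hcross hy hx
  · simpa only [indicator_of_notMem hx, indicator_of_notMem hy, dist_self] using by positivity

variable [FiniteDimensional ℝ E] [MeasurableSpace E] [BorelSpace E] (μ : Measure E)
  [μ.IsAddHaarMeasure]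

lemma setIntegral_det_one_add_fderiv_of_lipschitzOnWith {g : E → E} {s : Set E} {K : ℝ≥0}
    (hK : K < 1) (hs : IsOpen s) (hg : Differentiable ℝ g)
    (hlip : LipschitzOnWith K g (closure s)) (hzero : EqOn g 0 (frontier s)) :
    ∫ x in s, (1 + fderiv ℝ g x).det ∂μ = μ.real s := by
  have : CompleteSpace E := FiniteDimensional.complete ℝ E
  let f : E → E := fun x => x + s.indicator g x
  have hf : Function.Bijective f := bijective_id_add_of_lipschitzWith hK
    (lipschitzWith_indicator_of_eqOn_frontier hlip hzero)
  have himage : f '' s = s := by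
    have hcompl : f '' sᶜ = sᶜ := by
      refine EqOn.image_eq_self fun x hx => ?_
      simp only [f, indicator_of_notMem hx, add_zero, id_eq]
    rw [← compl_inj_iff, ← image_compl_eq hf, hcompl]
  have hderiv : ∀ x ∈ s, HasFDerivWithinAt f (1 + fderiv ℝ g x) s x := fun x hx =>
    ((hasFDerivAt_id x).add (hg x).hasFDerivAt).hasFDerivWithinAt.congr
      (fun y hy => by simp only [f, indicator_of_mem hy]; rfl)
      (by simp only [f, indicator_of_mem hx]; rfl)
  have hdet : ∀ x ∈ s, |(1 + fderiv ℝ g x).det| = (1 + fderiv ℝ g x).det := by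
    intro x hx
    refine abs_of_pos (det_one_add_pos_of_norm_lt_one (lt_of_le_of_lt ?_ (NNReal.coe_lt_one.2 hK)))
    exact norm_fderiv_le_of_lipschitzOn ℝ (hs.mem_nhds hx) (hlip.mono subset_closure)
  calc ∫ x in s, (1 + fderiv ℝ g x).det ∂μ = ∫ x in s, |(1 + fderiv ℝ g x).det| • (1 : ℝ) ∂μ :=
        setIntegral_congr_fun hs.measurableSet fun x hx => by
          simp only [hdet x hx, smul_eq_mul, mul_one]
    _ = ∫ _ in f '' s, (1 : ℝ) ∂μ :=
        (integral_image_eq_integral_abs_det_fderiv_smul μ hs.measurableSet hderiv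
          hf.injective.injOn fun _ => 1).symm
    _ = μ.real s := by rw [himage, setIntegral_const, smul_eq_mul, mul_one]

-- For small `t` the map `x ↦ x + t • g x` is a bijection of `s`, and the integral of its Jacobian
-- is a polynomial in `t`, hence constant.
lemma setIntegral_det_one_add_fderiv {g : E → E} {s : Set E} (hs : IsOpen s)
    (hbdd : Bornology.IsBounded s) (hg : ContDiff ℝ 1 g) (hzero : EqOn g 0 (frontier s)) :
    ∫ x in s, (1 + fderiv ℝ g x).det ∂μ = μ.real s := by
  have : ProperSpace E := FiniteDimensional.proper ℝ E
  have hdiff : Differentiable ℝ g := hg.differentiable one_ne_zero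
  have hcont : Continuous (fderiv ℝ g) := hg.continuous_fderiv one_ne_zero
  obtain ⟨K, hlip⟩ := hg.locallyLipschitz.locallyLipschitzOn.exists_lipschitzOnWith_of_compact
    hbdd.isCompact_closure
  choose p hpdeg hp using fun x =>
    exists_polynomial_eval_eq_det_one_add_smul (fderiv ℝ g x : E →ₗ[ℝ] E)
  have heval (t : ℝ) (x : E) : (p x).eval t = (1 + t • fderiv ℝ g x).det := hp x t
  have hint (t : ℝ) : IntegrableOn (fun x => (p x).eval t) s μ := by
    have hdet : Continuous fun x => (1 + t • fderiv ℝ g x).det :=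
      ContinuousLinearMap.continuous_det.comp (continuous_const.add (hcont.const_smul t))
    simp only [heval]
    exact (hdet.continuousOn.integrableOn_compact hbdd.isCompact_closure).mono_set subset_closure
  have hsmall : ∀ t ∈ {t : ℝ | ‖t‖₊ * K < 1}, ∫ x in s, (p x).eval t ∂μ = μ.real s := by
    intro t ht
    have hlipt : LipschitzOnWith (‖t‖₊ * K) (t • g) (closure s) :=
      (lipschitzWith_smul t).comp_lipschitzOnWith hlip
    rw [← setIntegral_det_one_add_fderiv_of_lipschitzOnWith μ ht hs (hdiff.const_smul t) hlipt
      fun x hx => by simp [hzero hx]]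
    simp only [heval, fderiv_const_smul (hdiff _) t]
  have hinfinite : {t : ℝ | ‖t‖₊ * K < 1}.Infinite := by
    refine infinite_of_mem_nhds 0 (IsOpen.mem_nhds ?_ (by simp))
    exact isOpen_lt (by fun_prop) continuous_const
  have hone := integral_eval_eq_of_infinite hpdeg hinfinite (fun t _ => hint t) hsmall 1
  simpa only [heval, one_smul] using hone

end Normed

section InnerProductSpace

variable {E : Type*} [NormedAddCommGroup E] [InnerProductSpace ℝ E] [FiniteDimensional ℝ E]

lemma det_fderiv_eq_zero_of_norm_eq {f : E → E} {ρ : ℝ} (hρ : ρ ≠ 0) (hf : Differentiable ℝ f)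
    (hnorm : ∀ x, ‖f x‖ = ρ) (x : E) : (fderiv ℝ f x).det = 0 := by
  by_contra hdet
  have hunit : IsUnit (fderiv ℝ f x : E →ₗ[ℝ] E) :=
    LinearMap.isUnit_iff_isUnit_det _ |>.2 (isUnit_iff_ne_zero.2 hdet)
  obtain ⟨y, hy⟩ := LinearMap.range_eq_top.1 (LinearMap.isUnit_iff_range_eq_top _ |>.1 hunit) (f x)
  have hconst : (fun z => inner ℝ (f z) (f z)) = fun _ => ρ ^ 2 := by
    funext z
    rw [real_inner_self_eq_norm_sq, hnorm]
  have hderiv := (hf x).hasFDerivAt.inner ℝ (hf x).hasFDerivAt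
  rw [hconst] at hderiv
  have hinner := congrArg (fun L => L y) (hderiv.unique (hasFDerivAt_const _ _))
  rw [ContinuousLinearMap.coe_coe] at hy
  simp [hy, hnorm, hρ] at hinner

lemma exists_norm_ne_of_eqOn_sphere_id {f : E → E} {ρ : ℝ} (hρ : 0 < ρ) (hf : ContDiff ℝ 1 f)
    (hid : EqOn f id (sphere 0 ρ)) : ∃ x, ‖f x‖ ≠ ρ := by
  by_contra! hnorm
  let _ : MeasurableSpace E := borel E
  have _ : BorelSpace E := ⟨rfl⟩
  have hdiff := hf.differentiable one_ne_zero
  have hvolume := setIntegral_det_one_add_fderiv volume (g := f - id) (s := ball (0 : E) ρ)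
    isOpen_ball isBounded_ball (hf.sub contDiff_id) fun x hx => by
      rw [frontier_ball 0 hρ.ne'] at hx
      simp [hid hx]
  have hderiv (x : E) : 1 + fderiv ℝ (f - id) x = fderiv ℝ f x := by
    rw [fderiv_sub (hdiff x) differentiableAt_id, fderiv_id]
    exact add_sub_cancel _ _
  simp only [hderiv, det_fderiv_eq_zero_of_norm_eq hρ.ne' hdiff hnorm, integral_zero] at hvolume
  have hpos : 0 < volume.real (ball (0 : E) ρ) :=
    ENNReal.toReal_pos (measure_ball_pos volume 0 hρ).ne' measure_ball_lt_top.ne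
  exact hpos.ne hvolume

-- Smoothing `R` without creating zeros and normalizing would give a `C¹` retraction onto a sphere.
lemma exists_eq_zero_of_eventuallyEq_id_of_innerProductSpace {R : E → E} (hR : Continuous R)
    (hid : R =ᶠ[cocompact E] id) : ∃ x, R x = 0 := by
  by_contra! hne
  obtain ⟨ρ, hρ, hid⟩ : ∃ ρ, 0 < ρ ∧ ∀ x, ρ ≤ ‖x‖ → R x = x := by
    rw [EventuallyEq, ← cobounded_eq_cocompact, hasBasis_cobounded_norm.eventually_iff] at hid
    obtain ⟨r, -, hr⟩ := hid
    exact ⟨max r 1, by positivity, fun x hx => hr ((le_max_left r 1).trans hx)⟩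
  obtain ⟨g, hg, hclose, hsupp⟩ := Continuous.exists_contDiff_approx (f := fun x => R x - x)
    (ε := fun x => ‖R x‖) 1 (by fun_prop) (by fun_prop) fun x => norm_pos_iff.2 (hne x)
  have hgid : ∀ x, ρ ≤ ‖x‖ → g x = 0 := fun x hx => by
    by_contra hgx
    exact hsupp (Function.mem_support.2 hgx) (by simp [hid x hx])
  have hsum : ∀ x, x + g x ≠ 0 := fun x hx => by
    have hdist := hclose x
    rw [eq_neg_of_add_eq_zero_right hx, dist_eq_norm,
      show -x - (R x - x) = -R x by abel, norm_neg] at hdist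
    exact lt_irrefl _ hdist
  have hsmooth : ContDiff ℝ 1 fun x => x + g x := contDiff_id.add hg
  have hnormalized : ContDiff ℝ 1 fun x => (ρ / ‖x + g x‖) • (x + g x) :=
    (contDiff_const.div (hsmooth.norm ℝ hsum) fun x => norm_ne_zero_iff.2 (hsum x)).smul hsmooth
  obtain ⟨x, hx⟩ := exists_norm_ne_of_eqOn_sphere_id hρ hnormalized fun x hx => by
    have hxρ : ‖x‖ = ρ := mem_sphere_zero_iff_norm.1 hx
    simp [hgid x hxρ.ge, hxρ, hρ.ne']
  refine hx ?_
  rw [norm_smul, norm_div, norm_norm, Real.norm_of_nonneg hρ.le,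
    div_mul_cancel₀ _ (norm_ne_zero_iff.2 (hsum x))]

end InnerProductSpace

lemma exists_eq_zero_of_eventuallyEq_id {E : Type*} [NormedAddCommGroup E] [NormedSpace ℝ E]
    [FiniteDimensional ℝ E] {R : E → E} (hR : Continuous R) (hid : R =ᶠ[cocompact E] id) :
    ∃ x, R x = 0 := by
  let e := toEuclidean (E := E)
  obtain ⟨x, hx⟩ := exists_eq_zero_of_eventuallyEq_id_of_innerProductSpace
    (R := e ∘ R ∘ e.symm) (by fun_prop) <| by
      have htendsto := e.symm.toHomeomorph.isClosedEmbedding.tendsto_cocompact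
      filter_upwards [htendsto.eventually hid] with x hx
      simpa using congrArg e hx
  exact ⟨e.symm x, by simpa using hx⟩

end Degree

section Cube

open Metric Set Filter Topology
open scoped unitInterval

-- `R` agrees with `F (1, ·)` on the unit ball, runs the homotopy backwards over `1 ≤ ‖x‖ ≤ 2`, and
-- joins `F (0, ·)` linearly to the identity over `2 ≤ ‖x‖ ≤ 3`.
lemma exists_mem_closedBall_eq_zero_of_homotopy {E : Type*} [NormedAddCommGroup E]
    [NormedSpace ℝ E] [FiniteDimensional ℝ E] {F : I × E → E} (hF : Continuous F)
    (hne : ∀ τ, ∀ x ∈ sphere (0 : E) 1, F (τ, x) ≠ 0)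
    (hdir : ∀ x ∈ sphere (0 : E) 1, ∀ c : ℝ, 0 ≤ c → F (0, x) ≠ -(c • x)) :
    ∃ x ∈ closedBall (0 : E) 1, F (1, x) = 0 := by
  let τ : E → I := fun x => projIcc 0 1 zero_le_one (2 - ‖x‖)
  let lam : E → I := fun x => projIcc 0 1 zero_le_one (3 - ‖x‖)
  let ret : E → E := fun x => (max 1 ‖x‖)⁻¹ • x
  let R : E → E := fun x => (lam x : ℝ) • F (τ x, ret x) + (1 - lam x : ℝ) • x
  have hR : Continuous R := by
    have hmax : ∀ x : E, max 1 ‖x‖ ≠ 0 := fun x => by positivity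
    fun_prop (disch := exact hmax _)
  have hid : R =ᶠ[cocompact E] id := by
    have : ProperSpace E := FiniteDimensional.proper ℝ E
    filter_upwards [(tendsto_norm_cocompact_atTop (E := E)).eventually_ge_atTop 3] with x hx
    have hlam : lam x = 0 := projIcc_of_le_left _ (by linarith)
    simp [R, hlam]
  obtain ⟨x, hx⟩ := exists_eq_zero_of_eventuallyEq_id hR hid
  rcases le_total ‖x‖ 1 with hx1 | hx1
  · have hτ : τ x = 1 := projIcc_of_right_le _ (by linarith)
    have hlam : lam x = 1 := projIcc_of_right_le _ (by linarith)
    exact ⟨x, by simpa using hx1, by simpa [R, hτ, hlam, ret, hx1] using hx⟩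
  have hret : ret x ∈ sphere (0 : E) 1 := by
    have hpos : 0 < ‖x‖ := by linarith
    simp [ret, norm_smul, max_eq_right hx1, hpos.ne']
  exfalso
  rcases le_total ‖x‖ 2 with hx2 | hx2
  · have hlam : lam x = 1 := projIcc_of_right_le _ (by linarith)
    exact hne _ _ hret (by simpa [R, hlam] using hx)
  · have hτ : τ x = 0 := projIcc_of_le_left _ (by linarith)
    have hxret : x = ‖x‖ • ret x := by
      rw [smul_smul, max_eq_right hx1, mul_inv_cancel₀ (by linarith), one_smul]
    have hsum : (lam x : ℝ) • F (0, ret x) + (1 - lam x : ℝ) • x = 0 := by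
      simpa only [R, hτ] using hx
    rcases (lam x).2.1.eq_or_lt' with hlam | hlam
    · have hx0 : x = 0 := by simpa [hlam] using hsum
      norm_num [hx0] at hx1
    · refine hdir _ hret ((lam x : ℝ)⁻¹ * ((1 - lam x) * ‖x‖))
        (mul_nonneg (inv_nonneg.2 hlam.le)
          (mul_nonneg (sub_nonneg.2 (lam x).2.2) (norm_nonneg x))) ?_
      rw [mul_smul, mul_smul, ← hxret, ← smul_neg, ← eq_neg_of_add_eq_zero_left hsum, smul_smul,
        inv_mul_cancel₀ hlam.ne', one_smul]

variable {N : Type*}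

/-- The point `s` of the unit cube, in the coordinates of the cube `[-1, 1]^N`. -/
def centeredCube (s : N → I) : N → ℝ := fun i => 2 * (s i : ℝ) - 1

/-- The top and the side faces of the cylinder `I × I^N` over the cube, on which a null-homotopy of
a based map of the cube is constant. -/
def openBox (N : Type*) : Set (I × (N → I)) := {z | z.1 = 1 ∨ z.2 ∈ Cube.boundary N}

lemma isPreconnected_openBox : IsPreconnected (openBox N) := by
  have htop : IsPreconnected (({1} : Set I) ×ˢ (univ : Set (N → I))) :=
    isPreconnected_singleton.prod isPreconnected_univ
  refine isPreconnected_of_forall (1, 0) fun ⟨t, s⟩ hts => ?_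
  rcases hts with ht | hs
  · exact ⟨{1} ×ˢ univ, fun z hz => Or.inl hz.1, by simp, ⟨ht, mem_univ s⟩, htop⟩
  · have hline : IsPreconnected ((univ : Set I) ×ˢ ({s} : Set (N → I))) :=
      isPreconnected_univ.prod isPreconnected_singleton
    refine ⟨_, ?_, by simp, by simp, htop.union (1, s) (by simp) (by simp) hline⟩
    rintro z (hz | hz)
    · exact Or.inl hz.1
    · exact Or.inr (hz.2 ▸ hs)

lemma exists_nullhomotopy {Y : Type*} [TopologicalSpace Y] (f : C(N → I, Y)) {s₀ : N → I}
    (hf : ∀ s ∈ Cube.boundary N, f s = f s₀)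
    (htrivial : Subsingleton (HomotopyGroup N Y (f s₀))) :
    ∃ H : C(I × (N → I), Y), (∀ s, H (0, s) = f s) ∧ ∀ z ∈ openBox N, H z = f s₀ := by
  let loop : GenLoop N Y (f s₀) := ⟨f, hf⟩
  have hclass : (Quotient.mk _ loop : HomotopyGroup N Y (f s₀)) = Quotient.mk _ GenLoop.const :=
    htrivial.elim _ _
  obtain ⟨H⟩ : GenLoop.Homotopic loop GenLoop.const := Quotient.exact hclass
  refine ⟨H, H.apply_zero, ?_⟩
  rintro ⟨t, s⟩ (rfl | hs)
  · exact H.apply_one s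
  · exact (H.eq_fst t hs).trans (hf s hs)

/-- The cube `[-1, 1]^N × [-1, 1]`, the unit ball of `(N → ℝ) × ℝ`, identified affinely with the
cylinder `I × I^N` so that height `1` is the bottom of the cylinder. Coordinates outside `[-1, 1]`
are clamped. -/
def toCylinder (x : (N → ℝ) × ℝ) : I × (N → I) :=
  (projIcc 0 1 zero_le_one ((1 - x.2) / 2), fun i => projIcc 0 1 zero_le_one ((1 + x.1 i) / 2))

lemma continuous_toCylinder : Continuous (toCylinder (N := N)) := by
  unfold toCylinder
  fun_prop

lemma toCylinder_fst_eq_zero {x : (N → ℝ) × ℝ} (hx : x.2 = 1) : (toCylinder x).1 = 0 :=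
  projIcc_of_le_left zero_le_one (by linarith)

variable [Fintype N]

/-- The map from the unit cube to the punctured space `(N → ℝ) × ℝ` that represents the collapse of
the cube onto a sphere: its boundary goes to the south pole `(0, -1)` and its center to the north
pole. Its values need only be nonzero, and are not normalized. -/
def cubeToSphere (s : N → I) : (N → ℝ) × ℝ :=
  ((1 - ‖centeredCube s‖) • centeredCube s, 1 - 2 * ‖centeredCube s‖)

lemma continuous_cubeToSphere : Continuous (cubeToSphere (N := N)) := by
  unfold cubeToSphere centeredCube
  fun_prop

lemma norm_centeredCube_le_one (s : N → I) : ‖centeredCube s‖ ≤ 1 := by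
  refine (pi_norm_le_iff_of_nonneg zero_le_one).2 fun i => abs_le.2 ?_
  constructor <;> simp only [centeredCube] <;> linarith [(s i).2.1, (s i).2.2]

lemma cubeToSphere_eq_of_mem_boundary {s : N → I} (hs : s ∈ Cube.boundary N) :
    cubeToSphere s = (0, -1) := by
  obtain ⟨i, hi⟩ := hs
  have hnorm : ‖centeredCube s‖ = 1 := by
    refine (norm_centeredCube_le_one s).antisymm ?_
    have hcoord : ‖centeredCube s i‖ = 1 := by
      rcases hi with hi | hi <;> norm_num [centeredCube, hi]
    exact hcoord ▸ norm_le_pi_norm _ i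
  norm_num [cubeToSphere, hnorm]

lemma cubeToSphere_ne_neg_smul (s : N → I) {c : ℝ} (hc : 0 ≤ c) :
    cubeToSphere s ≠ -(c • (centeredCube s, 1)) := by
  intro h
  have hfst : (1 - ‖centeredCube s‖) • centeredCube s = -(c • centeredCube s) :=
    congrArg Prod.fst h
  have hsnd : 1 - 2 * ‖centeredCube s‖ = -c := by simpa [cubeToSphere] using congrArg Prod.snd h
  have hle := norm_centeredCube_le_one s
  rw [← neg_smul, ← sub_eq_zero, ← sub_smul, smul_eq_zero] at hfst
  rcases hfst with hscalar | hzero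
  · linarith
  · rw [hzero, norm_zero] at hsnd
    linarith

lemma cubeToSphere_ne_zero (s : N → I) : cubeToSphere s ≠ 0 := by
  simpa using cubeToSphere_ne_neg_smul s le_rfl

lemma mem_boundary_of_norm_centeredCube_eq_one {s : N → I} (hs : ‖centeredCube s‖ = 1) :
    s ∈ Cube.boundary N := by
  by_contra hmem
  refine hs.not_lt ((pi_norm_lt_iff one_pos).2 fun i => abs_lt.2 ?_)
  have h0 : (0 : ℝ) < s i := unitInterval.pos_iff_ne_zero.2 fun h => hmem ⟨i, Or.inl h⟩
  have h1 : (s i : ℝ) < 1 := unitInterval.lt_one_iff_ne_one.2 fun h => hmem ⟨i, Or.inr h⟩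
  constructor <;> simp only [centeredCube] <;> linarith

lemma centeredCube_toCylinder {x : (N → ℝ) × ℝ} (hx : ‖x‖ ≤ 1) :
    centeredCube (toCylinder x).2 = x.1 := by
  funext i
  have hi := abs_le.1 ((norm_le_pi_norm x.1 i).trans ((norm_fst_le x).trans hx))
  have hmem : (1 + x.1 i) / 2 ∈ Icc (0 : ℝ) 1 := ⟨by linarith, by linarith⟩
  simp only [centeredCube, toCylinder, projIcc_of_mem _ hmem]
  ring

lemma toCylinder_mem_openBox {x : (N → ℝ) × ℝ} (hx : ‖x‖ = 1) (hbottom : x.2 ≠ 1) :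
    toCylinder x ∈ openBox N := by
  rcases max_choice ‖x.1‖ ‖x.2‖ with h | h
  · right
    apply mem_boundary_of_norm_centeredCube_eq_one
    rw [centeredCube_toCylinder hx.le, ← h, ← Prod.norm_def, hx]
  · left
    have hneg : x.2 = -1 := by
      rcases eq_or_eq_neg_of_abs_eq ((h.symm.trans hx : |x.2| = 1)) with h | h
      exacts [absurd h hbottom, h]
    exact projIcc_of_right_le zero_le_one (by linarith)

-- `cubeToSphere` followed by the identification of the cylinder's boundary with the sphere is never
-- antipodal to the identity, so it has degree one and admits no nonvanishing extension.
theorem exists_eq_zero_of_cubeToSphere {K : I × I × (N → I) → (N → ℝ) × ℝ} (hK : Continuous K)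
    {s₀ : N → I} (hs₀ : s₀ ∈ Cube.boundary N) (hbottom : ∀ s, K (0, 0, s) = cubeToSphere s)
    (hconst : ∀ τ, ∀ z ∈ openBox N, K (τ, z) = K (τ, 0, s₀)) (hne : ∀ τ s, K (τ, 0, s) ≠ 0) :
    ∃ z, K (1, z) = 0 := by
  suffices ∃ x ∈ closedBall (0 : (N → ℝ) × ℝ) 1, K (1, toCylinder x) = 0 from
    let ⟨_, _, hx⟩ := this; ⟨_, hx⟩
  refine exists_mem_closedBall_eq_zero_of_homotopy
    (F := fun y : I × ((N → ℝ) × ℝ) => K (y.1, toCylinder y.2))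
    (hK.comp (continuous_fst.prodMk (continuous_toCylinder.comp continuous_snd))) ?_ ?_
  · intro τ x hx
    rw [mem_sphere_zero_iff_norm] at hx
    by_cases hx2 : x.2 = 1
    · simpa only [← toCylinder_fst_eq_zero hx2] using hne τ (toCylinder x).2
    · exact (hconst τ _ (toCylinder_mem_openBox hx hx2)).trans_ne (hne τ s₀)
  · intro x hx c hc
    rw [mem_sphere_zero_iff_norm] at hx
    by_cases hx2 : x.2 = 1
    · have hdir := cubeToSphere_ne_neg_smul (toCylinder x).2 hc
      rw [← hbottom, centeredCube_toCylinder hx.le, ← hx2] at hdir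
      simpa only [← toCylinder_fst_eq_zero hx2] using hdir
    · change K (0, toCylinder x) ≠ _
      rw [hconst 0 _ (toCylinder_mem_openBox hx hx2), hbottom, cubeToSphere_eq_of_mem_boundary hs₀]
      intro hsouth
      have hc1 : 1 = c := by
        simpa [norm_smul, abs_of_nonneg hc, hx, Prod.norm_def] using congrArg norm hsouth
      exact hx2 (by simpa [← hc1] using (congrArg Prod.snd hsouth).symm)

end Cube

section Angle

open Set
open scoped unitInterval

-- The logarithm at time `0` is the branch cut along the negative imaginary axis.
lemma exists_continuous_log_lift {A : Type*} [TopologicalSpace A] (w : C(I × A, ℂ))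
    (hw : ∀ z, w z ≠ 0) (hslit : ∀ a, -Complex.I * w (0, a) ∈ Complex.slitPlane) :
    ∃ F : C(I × A, ℂ), (∀ z, Complex.exp (F z) = w z) ∧
      ∀ a, (F (0, a)).im ∈ Ioo (-(Real.pi / 2)) (3 * (Real.pi / 2)) := by
  let H : C(I × A, {z : ℂ // z ≠ 0}) := ⟨fun z => ⟨w z, hw z⟩, by fun_prop⟩
  let f : C(A, ℂ) :=
    ⟨fun a => Complex.log (-Complex.I * w (0, a)) + (Real.pi / 2 : ℝ) * Complex.I,
      (Continuous.clog (by fun_prop) hslit).add continuous_const⟩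
  have hexp (a : A) : Complex.exp (f a) = w (0, a) := by
    simp only [f, ContinuousMap.coe_mk, Complex.exp_add, Complex.ofReal_div, Complex.ofReal_ofNat,
      Complex.exp_log (Complex.slitPlane_ne_zero (hslit a)), Complex.exp_pi_div_two_mul_I]
    linear_combination (-w (0, a)) * Complex.I_mul_I
  have hH (a : A) : H (0, a) = ⟨Complex.exp (f a), Complex.exp_ne_zero _⟩ :=
    Subtype.ext (hexp a).symm
  refine ⟨Complex.isCoveringMap_exp.liftHomotopy H f hH, fun z => ?_, fun a => ?_⟩
  · exact congrArg Subtype.val (congrFun (Complex.isCoveringMap_exp.liftHomotopy_lifts H f hH) z)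
  · have him : (f a).im = Complex.arg (-Complex.I * w (0, a)) + Real.pi / 2 := by
      simp [f, Complex.log_im]
    rw [Complex.isCoveringMap_exp.liftHomotopy_zero H f hH, him]
    have hlower := Complex.neg_pi_lt_arg (-Complex.I * w (0, a))
    have hupper := (Complex.arg_le_pi _).lt_of_ne (Complex.slitPlane_arg_ne_pi (hslit a))
    constructor <;> linarith

lemma eq_of_exp_eq_of_isPreconnected {Z : Type*} [TopologicalSpace Z] {F : Z → ℂ} {S : Set Z}
    (hS : IsPreconnected S) (hF : ContinuousOn F S)
    (hexp : ∀ z ∈ S, ∀ z' ∈ S, Complex.exp (F z) = Complex.exp (F z')) {z z' : Z} (hz : z ∈ S)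
    (hz' : z' ∈ S) : F z = F z' :=
  Complex.isCoveringMap_exp.constOn_of_comp hS hF
    (fun z hz z' hz' => Subtype.ext (hexp z hz z' hz')) hz hz'

lemma exists_continuous_angle {A : Type*} [TopologicalSpace A] {x y : I × A → ℝ}
    (hx : Continuous x) (hy : Continuous y) (hne : ∀ z, x z = 0 → y z ≠ 0)
    (hpos : ∀ a, x (0, a) = 0 → 0 < y (0, a)) {S : Set (I × A)} (hS : IsPreconnected S)
    (hxS : ∀ z ∈ S, ∀ z' ∈ S, x z = x z') (hyS : ∀ z ∈ S, ∀ z' ∈ S, y z = y z') :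
    ∃ θ : C(I × A, ℝ),
      (∀ z, ∃ ρ > 0, ∀ ψ, Real.cos ψ * x z + Real.sin ψ * y z = ρ * Real.cos (θ z - ψ)) ∧
      (∀ a, θ (0, a) ∈ Ioo (-(Real.pi / 2)) (3 * (Real.pi / 2))) ∧
      ∀ z ∈ S, ∀ z' ∈ S, θ z = θ z' := by
  let w : C(I × A, ℂ) := ⟨fun z => x z + y z * Complex.I, by fun_prop⟩
  have hre (z : I × A) : (w z).re = x z := by simp [w]
  have him (z : I × A) : (w z).im = y z := by simp [w]
  obtain ⟨F, hF, hF0⟩ := exists_continuous_log_lift w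
    (fun z hz => hne z (by rw [← hre, hz, Complex.zero_re]) (by rw [← him, hz, Complex.zero_im]))
    fun a => by
      rw [Complex.mem_slitPlane_iff]
      by_cases hxa : x (0, a) = 0
      · exact Or.inl (by simpa [him] using hpos a hxa)
      · exact Or.inr (by simpa [hre] using hxa)
  refine ⟨⟨fun z => (F z).im, by fun_prop⟩, fun z => ?_, hF0, fun z hz z' hz' => ?_⟩
  · refine ⟨Real.exp (F z).re, Real.exp_pos _, fun ψ => ?_⟩
    rw [← hre, ← him, ← hF, Complex.exp_re, Complex.exp_im]
    simp only [ContinuousMap.coe_mk, Real.cos_sub]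
    ring
  · refine congrArg Complex.im (eq_of_exp_eq_of_isPreconnected hS
      F.continuous.continuousOn ?_ hz hz')
    intro z hz z' hz'
    rw [hF, hF]
    exact Complex.ext (by rw [hre, hre, hxS z hz z' hz']) (by rw [him, him, hyS z hz z' hz'])

lemma exists_continuous_min_angle {A ι : Type*} [TopologicalSpace A] [Finite ι] [Nonempty ι]
    {x y : ι → I × A → ℝ} (hx : ∀ j, Continuous (x j)) (hy : ∀ j, Continuous (y j))
    (hne : ∀ j z, x j z = 0 → y j z ≠ 0) (hpos : ∀ j a, x j (0, a) = 0 → 0 < y j (0, a))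
    (hexists : ∀ a, ∃ j, 0 < x j (0, a)) {S : Set (I × A)} (hS : IsPreconnected S)
    (hxS : ∀ j, ∀ z ∈ S, ∀ z' ∈ S, x j z = x j z')
    (hyS : ∀ j, ∀ z ∈ S, ∀ z' ∈ S, y j z = y j z') :
    ∃ φ : C(I × A, ℝ),
      (∀ z, ∃ j, ∃ ρ > 0, ∀ ψ,
        Real.cos ψ * x j z + Real.sin ψ * y j z = ρ * Real.cos (φ z - ψ)) ∧
      (∀ a, φ (0, a) ∈ Ioo (-(Real.pi / 2)) (Real.pi / 2)) ∧
      ∀ z ∈ S, ∀ z' ∈ S, φ z = φ z' := by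
  have : Fintype ι := Fintype.ofFinite ι
  choose θ hθ hθzero hθS using fun j =>
    exists_continuous_angle (hx j) (hy j) (hne j) (hpos j) hS (hxS j) (hyS j)
  let φ : C(I × A, ℝ) :=
    ⟨fun z => Finset.univ.inf' Finset.univ_nonempty fun j => θ j z,
      Continuous.finset_inf'_apply Finset.univ_nonempty fun j _ => (θ j).continuous⟩
  have hφ (z : I × A) : ∃ j, φ z = θ j z := by
    obtain ⟨j, -, hj⟩ := Finset.exists_mem_eq_inf' Finset.univ_nonempty fun j => θ j z
    exact ⟨j, hj⟩
  refine ⟨φ, fun z => ?_, fun a => ⟨?_, ?_⟩, fun z hz z' hz' => ?_⟩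
  · obtain ⟨j, hj⟩ := hφ z
    exact ⟨j, hj ▸ hθ j z⟩
  · obtain ⟨j, hj⟩ := hφ (0, a)
    exact hj ▸ (hθzero j a).1
  · obtain ⟨j, hj⟩ := hexists a
    refine (Finset.inf'_le _ (Finset.mem_univ j)).trans_lt (lt_of_not_ge fun hle => ?_)
    have hcos := Real.cos_nonpos_of_pi_div_two_le_of_le hle (by linarith [(hθzero j a).2])
    obtain ⟨ρ, hρ, hcomb⟩ := hθ j (0, a)
    have hxρ : x j (0, a) = ρ * Real.cos (θ j (0, a)) := by simpa using hcomb 0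
    nlinarith
  · simp only [hθS _ z hz z' hz', φ, ContinuousMap.coe_mk]

-- Multiply `a + i b` by `exp (-iφ)`, where `φ` is the least of the arguments of the
-- `βⱼ (a + i b)`: a form attaining the minimum shows that the real part does not lie in `ker P`.
theorem exists_common_zero_of_cubeToSphere {N V ι : Type*} [Fintype N] [NormedAddCommGroup V]
    [NormedSpace ℝ V] [Finite ι] (β : ι → V →L[ℝ] ℝ) (P : V →L[ℝ] (N → ℝ) × ℝ)
    (hP : ∀ u, P u = 0 → ∀ j, β j u = 0) {a b : I × (N → I) → V} (ha : Continuous a)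
    (hb : Continuous b) {s₀ : N → I} (hs₀ : s₀ ∈ Cube.boundary N)
    (haconst : ∀ z ∈ openBox N, a z = a (0, s₀)) (hbconst : ∀ z ∈ openBox N, b z = b (0, s₀))
    (hPa : ∀ s, P (a (0, s)) = cubeToSphere s)
    (hpos : ∀ s j, β j (a (0, s)) = 0 → 0 < β j (b (0, s)))
    (hexists : ∀ s, ∃ j, 0 < β j (a (0, s))) :
    ∃ z j, β j (a z) = 0 ∧ β j (b z) = 0 := by
  by_contra! hne
  have : Nonempty ι := ⟨(hexists s₀).choose⟩
  obtain ⟨φ, hφ, hφzero, hφconst⟩ := exists_continuous_min_angle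
    (x := fun j z => β j (a z)) (y := fun j z => β j (b z)) (by fun_prop) (by fun_prop)
    (fun j z => hne z j) (fun j s => hpos s j) hexists isPreconnected_openBox
    (fun j z hz z' hz' => by rw [haconst z hz, haconst z' hz'])
    (fun j z hz z' hz' => by rw [hbconst z hz, hbconst z' hz'])
  let rotated : I × I × (N → I) → V := fun y =>
    Real.cos (y.1 * φ y.2) • a y.2 + Real.sin (y.1 * φ y.2) • b y.2
  have hrotated (τ : I) (z) (hcos : Real.cos ((1 - τ) * φ z) ≠ 0) : P (rotated (τ, z)) ≠ 0 := by
    intro hzero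
    obtain ⟨j, ρ, hρ, hcomb⟩ := hφ z
    have hβ := hP _ hzero j
    rw [map_add, map_smul, map_smul, smul_eq_mul, smul_eq_mul, hcomb, ← one_sub_mul] at hβ
    exact mul_ne_zero hρ.ne' hcos hβ
  have hcospos (τ : I) (s : N → I) : 0 < Real.cos ((1 - τ) * φ (0, s)) := by
    refine Real.cos_pos_of_mem_Ioo (abs_lt.1 ?_)
    calc |(1 - τ) * φ (0, s)| = (1 - τ) * |φ (0, s)| := by
          rw [abs_mul, abs_of_nonneg (sub_nonneg.2 τ.2.2)]
      _ ≤ |φ (0, s)| := mul_le_of_le_one_left (abs_nonneg _) (sub_le_self 1 τ.2.1)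
      _ < Real.pi / 2 := abs_lt.2 (hφzero s)
  obtain ⟨z, hz⟩ := exists_eq_zero_of_cubeToSphere (K := fun y => P (rotated y)) (by fun_prop) hs₀
    (fun s => by simp [rotated, hPa])
    (fun τ z hz => by
      simp only [rotated, haconst z hz, hbconst z hz, hφconst z hz (0, s₀) (Or.inr hs₀)])
    fun τ s => hrotated τ (0, s) (hcospos τ s).ne'
  exact hrotated 1 z (by simp) hz

end Angle

section LinearForms

open Set Filter Topology
open scoped unitInterval

variable {ι V : Type*}

lemma exists_forall_pos_of_forall_nonpos [Finite ι] [AddCommGroup V] [Module ℝ V]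
    (β : ι → V →ₗ[ℝ] ℝ) {x y : V} (hx : ∀ j, β j x ≤ 0) (hy : ∀ j, β j x = 0 → 0 < β j y) :
    ∃ w, ∀ j, 0 < β j w := by
  suffices ∀ᶠ η : ℝ in 𝓝[>] 0, ∀ j, 0 < β j (-x + η • y) from
    let ⟨η, hη⟩ := this.exists; ⟨-x + η • y, hη⟩
  refine eventually_all.2 fun j => ?_
  simp only [map_add, map_neg, map_smul, smul_eq_mul]
  rcases (hx j).eq_or_lt with hzero | hneg
  · filter_upwards [self_mem_nhdsWithin] with η hη
    simpa [hzero] using mul_pos hη (hy j hzero)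
  · have hcont : Continuous fun η : ℝ => -β j x + η * β j y := by fun_prop
    exact (hcont.continuousAt.eventually_const_lt (by simpa using hneg)).filter_mono
      nhdsWithin_le_nhds

lemma exists_mem_forall_add_ne_zero [Finite ι] [AddCommGroup V] [Module ℝ V] [TopologicalSpace V]
    (β : ι → V →L[ℝ] ℝ) {X : Submodule ℝ V} (hβ : ∀ j, ∃ x ∈ X, β j x ≠ 0) {K : Set V}
    (hK : IsCompact K) : ∃ p ∈ X, ∀ j, ∀ x ∈ K, β j (p + x) ≠ 0 := by
  obtain ⟨q, hqX, hq⟩ := Module.Dual.exists_forall_mem_ne_zero_of_forall_exists X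
    (fun j => (β j : V →ₗ[ℝ] ℝ)) hβ
  suffices ∀ᶠ c : ℝ in atTop, ∀ j, ∀ x ∈ K, β j (c • q + x) ≠ 0 from
    let ⟨c, hc⟩ := this.exists; ⟨c • q, X.smul_mem c hqX, hc⟩
  refine eventually_all.2 fun j => ?_
  obtain ⟨C, hC⟩ := hK.exists_bound_of_continuousOn (β j).continuous.continuousOn
  have hqj : 0 < |β j q| := abs_pos.2 (hq j)
  filter_upwards [(tendsto_id.atTop_mul_const hqj).eventually_gt_atTop C,
    eventually_ge_atTop 0] with c hcC hc x hx hzero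
  have habs : c * |β j q| = ‖β j x‖ := by
    rw [map_add, map_smul, smul_eq_mul] at hzero
    rw [eq_neg_of_add_eq_zero_right hzero, norm_neg, Real.norm_eq_abs, abs_mul, abs_of_nonneg hc]
  exact (hC x hx).not_gt (habs ▸ hcC)

-- The admissible values form a convex set at each point, and a value admissible at `u` remains so
-- near `u` because the inequations `f j ≠ 0` are open: a partition of unity glues local choices.
lemma exists_continuous_forall_pos_of_eq_zero {U : Type*} [TopologicalSpace U] [NormalSpace U]
    [ParacompactSpace U] [Finite ι] [AddCommGroup V] [Module ℝ V] [TopologicalSpace V]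
    [ContinuousAdd V] [ContinuousSMul ℝ V] (β : ι → V →ₗ[ℝ] ℝ) {f : ι → U → ℝ}
    (hf : ∀ j, Continuous (f j)) (hw : ∀ u, ∃ w, ∀ j, f j u = 0 → 0 < β j w) :
    ∃ y : C(U, V), ∀ u j, f j u = 0 → 0 < β j (y u) := by
  refine exists_continuous_forall_mem_convex_of_local_const
    (t := fun u => {w | ∀ j, f j u = 0 → 0 < β j w}) (fun u => ?_) fun u => ?_
  · simp only [ofPred_forall]
    exact convex_iInter fun j => convex_iInter fun _ => convex_halfSpace_gt (β j).isLinear 0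
  · obtain ⟨w, hw⟩ := hw u
    refine ⟨w, ?_⟩
    have hne : ∀ᶠ u' in 𝓝 u, ∀ j, f j u ≠ 0 → f j u' ≠ 0 :=
      eventually_all.2 fun j => eventually_imp_distrib_left.2 fun hj =>
        (hf j).continuousAt.eventually_ne hj
    filter_upwards [hne] with u' hu' j hj
    exact hw j (not_not.1 fun h => hu' j h hj)

lemma exists_surjective_ker_eq [NormedAddCommGroup V] [NormedSpace ℝ V] [FiniteDimensional ℝ V]
    {E : Type*} [NormedAddCommGroup E] [NormedSpace ℝ E] [FiniteDimensional ℝ E]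
    (X : Submodule ℝ V) (hX : Module.finrank ℝ X + Module.finrank ℝ E = Module.finrank ℝ V) :
    ∃ P : V →L[ℝ] E, Function.Surjective P ∧ P.ker = X := by
  have hrank : Module.finrank ℝ (V ⧸ X) = Module.finrank ℝ E := by
    have := X.finrank_quotient_add_finrank
    omega
  let e : (V ⧸ X) ≃ₗ[ℝ] E := LinearEquiv.ofFinrankEq _ _ hrank
  refine ⟨(e.toLinearMap ∘ₗ X.mkQ).toContinuousLinearMap, ?_, ?_⟩
  · exact e.surjective.comp X.mkQ_surjective
  · exact (LinearEquiv.ker_comp _ _).trans X.ker_mkQ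

lemma exists_cubeToSphere_lift {N : Type*} [Fintype N] [Finite ι] [NormedAddCommGroup V]
    [NormedSpace ℝ V] (β : ι → V →L[ℝ] ℝ) {P : V →L[ℝ] (N → ℝ) × ℝ}
    (hP : Function.Surjective P)
    (hw : ∀ u ∉ P.ker, ∃ w, ∀ j, P.ker ≤ (β j).ker → β j u = 0 → 0 < β j w) :
    ∃ x y : C(N → I, V), (∀ s, P (x s) = cubeToSphere s) ∧
      (∀ s ∈ Cube.boundary N, ∀ s' ∈ Cube.boundary N, x s = x s' ∧ y s = y s') ∧
      ∀ s j, β j (x s) = 0 → P.ker ≤ (β j).ker ∧ 0 < β j (y s) := by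
  obtain ⟨L, hL⟩ := P.toLinearMap.exists_rightInverse_of_surjective (LinearMap.range_eq_top.2 hP)
  have hPL (u) : P (L u) = u := LinearMap.congr_fun hL u
  have hLcont : Continuous L := L.continuous_of_finiteDimensional
  have hvanishing : ∀ j : {j // ¬ P.ker ≤ (β j).ker}, ∃ x ∈ P.ker, β j x ≠ 0 :=
    fun j => SetLike.not_le_iff_exists.1 j.2
  obtain ⟨p, hpP, hp⟩ := exists_mem_forall_add_ne_zero _ hvanishing
    (isCompact_range (hLcont.comp continuous_cubeToSphere))
  obtain ⟨v, hv⟩ := exists_continuous_forall_pos_of_eq_zero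
    (U := {u : (N → ℝ) × ℝ // u ≠ 0}) (fun j : {j // P.ker ≤ (β j).ker} => (β j : V →ₗ[ℝ] ℝ))
    (f := fun j u => β j (L u)) (by fun_prop) fun u =>
      let ⟨w, hw⟩ := hw (L u) (by simpa [hPL] using u.2)
      ⟨w, fun j => hw j j.2⟩
  refine ⟨⟨fun s => p + L (cubeToSphere s),
      continuous_const.add (hLcont.comp continuous_cubeToSphere)⟩,
    ⟨fun s => v ⟨cubeToSphere s, cubeToSphere_ne_zero s⟩,
      v.continuous.comp (continuous_cubeToSphere.subtype_mk _)⟩, fun s => ?_, ?_, ?_⟩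
  · simpa [hPL] using hpP
  · intro s hs s' hs'
    simp only [ContinuousMap.coe_mk, cubeToSphere_eq_of_mem_boundary hs,
      cubeToSphere_eq_of_mem_boundary hs', and_self]
  · intro s j hzero
    have hj : P.ker ≤ (β j).ker := not_not.1 fun hj => hp ⟨j, hj⟩ _ (mem_range_self s) hzero
    have hpj : β j p = 0 := hj hpP
    refine ⟨hj, hv _ ⟨j, hj⟩ ?_⟩
    simpa [hpj] using hzero

end LinearForms

section Arrangement

open Set

variable {ℓ n : ℕ} {α : Fin n → (Vsp ℓ →ₗ[ℝ] ℝ)} {ε : Fin n → ℝ}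

lemma mem_interKer {I : Finset (Fin n)} {x : Vsp ℓ} : x ∈ interKer α I ↔ ∀ i ∈ I, α i x = 0 := by
  simp [interKer]

/-- The real part of a vector of `ℂ^ℓ`. -/
def rePart (z : Fin ℓ → ℂ) : Vsp ℓ := WithLp.toLp 2 fun j => (z j).re

/-- The imaginary part of a vector of `ℂ^ℓ`. -/
def imPart (z : Fin ℓ → ℂ) : Vsp ℓ := WithLp.toLp 2 fun j => (z j).im

lemma continuous_rePart : Continuous (rePart (ℓ := ℓ)) := by
  unfold rePart
  fun_prop

lemma continuous_imPart : Continuous (imPart (ℓ := ℓ)) := by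
  unfold imPart
  fun_prop

lemma continuous_cplx : Continuous fun z : Vsp ℓ × Vsp ℓ => cplx z.1 z.2 := by
  unfold cplx
  fun_prop

lemma rePart_cplx (x v : Vsp ℓ) : rePart (cplx x v) = x := by
  ext j
  simp [rePart, cplx]

lemma imPart_cplx (x v : Vsp ℓ) : imPart (cplx x v) = v := by
  ext j
  simp [imPart, cplx]

lemma mem_MA_iff {z : Fin ℓ → ℂ} :
    z ∈ MA α ↔ ∀ i, α i (rePart z) = 0 → α i (imPart z) ≠ 0 := by
  refine forall_congr' fun i => ?_
  simp [cLin, rePart, imPart, Complex.ext_iff]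

lemma exists_forall_pos_of_notMem_interKer {I : Finset (Fin n)}
    (hlow : ∀ J, interKer α I < interKer α J → ConsistentAt α ε J) {u : Vsp ℓ}
    (hu : u ∉ interKer α I) :
    ∃ w, ∀ j, interKer α I ≤ (α j).ker → α j u = 0 → 0 < ε j * α j w := by
  classical
  let J : Finset (Fin n) := {j | interKer α I ≤ (α j).ker ∧ α j u = 0}
  have hlt : interKer α I < interKer α J := by
    refine SetLike.lt_iff_le_and_exists.2 ⟨fun x hx => ?_, u, ?_, hu⟩
    · exact mem_interKer.2 fun j hj => (Finset.mem_filter.1 hj).2.1 hx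
    · exact mem_interKer.2 fun j hj => (Finset.mem_filter.1 hj).2.2
  obtain ⟨w, hw⟩ := hlow J hlt
  refine ⟨w, fun j hj hju => hw j fun x hx => mem_interKer.1 hx j ?_⟩
  exact Finset.mem_filter.2 ⟨Finset.mem_univ j, hj, hju⟩

lemma exists_nullhomotopy_rePart_imPart {N : Type*}
    (htrivial : ∀ x₀ : MA α, Subsingleton (HomotopyGroup N (MA α) x₀))
    {x y : C(N → unitInterval, Vsp ℓ)} (hxy : ∀ s i, α i (x s) = 0 → α i (y s) ≠ 0)
    {s₀ : N → unitInterval} (hboundary : ∀ s ∈ Cube.boundary N, x s = x s₀ ∧ y s = y s₀) :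
    ∃ a b : C(unitInterval × (N → unitInterval), Vsp ℓ),
      (∀ s, a (0, s) = x s ∧ b (0, s) = y s) ∧ (∀ z ∈ openBox N, a z = x s₀ ∧ b z = y s₀) ∧
      ∀ z i, α i (a z) = 0 → α i (b z) ≠ 0 := by
  have hmem (s) : cplx (x s) (y s) ∈ MA α := by
    simpa only [mem_MA_iff, rePart_cplx, imPart_cplx] using hxy s
  let f : C(N → unitInterval, MA α) :=
    ⟨fun s => ⟨cplx (x s) (y s), hmem s⟩,
      (continuous_cplx.comp (x.continuous.prodMk y.continuous)).subtype_mk _⟩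
  have hre (s) : rePart (f s).1 = x s := rePart_cplx _ _
  have him (s) : imPart (f s).1 = y s := imPart_cplx _ _
  obtain ⟨H, hHzero, hHconst⟩ := exists_nullhomotopy f
    (fun s hs => Subtype.ext (congrArg₂ cplx (hboundary s hs).1 (hboundary s hs).2))
    (htrivial (f s₀))
  refine ⟨⟨fun z => rePart (H z).1, continuous_rePart.comp (by fun_prop)⟩,
    ⟨fun z => imPart (H z).1, continuous_imPart.comp (by fun_prop)⟩, fun s => ?_, fun z hz => ?_,
    fun z => mem_MA_iff.1 (H z).2⟩
  · simp only [ContinuousMap.coe_mk, hHzero, hre, him, and_self]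
  · simp only [ContinuousMap.coe_mk, hHconst z hz, hre, him, and_self]

theorem consistentAt_of_subsingleton_pi (hε : ∀ i, ε i ≠ 0) {k : ℕ} (hk : 0 < k)
    (htrivial : ∀ x₀ : MA α, Subsingleton (HomotopyGroup.Pi k (MA α) x₀)) {I : Finset (Fin n)}
    (hcodim : Module.finrank ℝ (interKer α I) + (k + 1) = ℓ)
    (hlow : ∀ J, interKer α I < interKer α J → ConsistentAt α ε J) : ConsistentAt α ε I := by
  let β (j : Fin n) : Vsp ℓ →L[ℝ] ℝ := ε j • (α j).toContinuousLinearMap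
  have hβ (j u) : β j u = 0 ↔ α j u = 0 := by simp [β, hε j]
  have hker (j) : (β j).ker = (α j).ker := Submodule.ext (hβ j)
  obtain ⟨P, hPsurj, hPker⟩ := exists_surjective_ker_eq (E := (Fin k → ℝ) × ℝ) (interKer α I)
    (by simpa using hcodim)
  obtain ⟨x, y, hPx, hboundary, hpos⟩ := exists_cubeToSphere_lift β hPsurj fun u hu => by
    simp only [hker, hPker, hβ] at hu ⊢
    exact exists_forall_pos_of_notMem_interKer hlow hu
  have hbase : (0 : Fin k → unitInterval) ∈ Cube.boundary (Fin k) := ⟨⟨0, hk⟩, Or.inl rfl⟩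
  obtain ⟨a, b, hzero, hconst, hne⟩ := exists_nullhomotopy_rePart_imPart htrivial
    (fun s i hi => mt (hβ i _).2 (hpos s i ((hβ i _).2 hi)).2.ne')
    fun s hs => hboundary s hs 0 hbase
  by_contra hcon
  have hexists (s) : ∃ j : {j // P.ker ≤ (β j).ker}, 0 < β j (x s) := by
    by_contra! hle
    obtain ⟨w, hw⟩ := exists_forall_pos_of_forall_nonpos
      (fun j : {j // P.ker ≤ (β j).ker} => (β j : Vsp ℓ →ₗ[ℝ] ℝ)) hle
      fun j hj => (hpos s j hj).2
    exact hcon ⟨w, fun j hj => hw ⟨j, by rwa [hPker, hker]⟩⟩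
  obtain ⟨z, j, hza, hzb⟩ := exists_common_zero_of_cubeToSphere
    (fun j : {j // P.ker ≤ (β j).ker} => β j) P (fun u hu j => j.2 hu) a.continuous b.continuous
    hbase (fun z hz => by rw [(hconst z hz).1, (hzero 0).1])
    (fun z hz => by rw [(hconst z hz).2, (hzero 0).2])
    (fun s => by rw [(hzero s).1, hPx])
    (fun s j hj => by rw [(hzero s).1] at hj; rw [(hzero s).2]; exact (hpos s j hj).2)
    fun s => by simpa only [(hzero s).1] using hexists s
  exact hne z j ((hβ j _).1 hza) ((hβ j _).1 hzb)

theorem sigmaFilt_succ_eq {k : ℕ} (hk : 0 < k)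
    (htrivial : ∀ x₀ : MA α, Subsingleton (HomotopyGroup.Pi k (MA α) x₀)) :
    SigmaFilt ℓ α (k + 1) = SigmaFilt ℓ α k := by
  refine Subset.antisymm (fun ε hε => ⟨hε.1, fun I hI => hε.2 I (by omega)⟩)
    fun ε hε => ⟨hε.1, fun I hI => ?_⟩
  rcases hI.lt_or_eq with hlt | heq
  · exact hε.2 I (by omega)
  · have hsign (i) : ε i ≠ 0 := by rcases hε.1 i with h | h <;> norm_num [h]
    refine consistentAt_of_subsingleton_pi hsign hk htrivial (by omega) fun J hIJ => hε.2 J ?_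
    have := Submodule.finrank_lt_finrank_of_lt hIJ
    omega

end Arrangement

theorem aspherical_implies_no_gap_general {ℓ n : ℕ} (α : Fin n → (Vsp ℓ →ₗ[ℝ] ℝ)) {m : ℕ}
    (hm : 2 ≤ m) (htrivial : ∀ k, 2 ≤ k → k < m → ∀ x₀ : MA α,
      Subsingleton (HomotopyGroup.Pi k (MA α) x₀)) :
    SigmaFilt ℓ α m = SigmaFilt ℓ α 2 := by
  induction m, hm using Nat.le_induction with
  | base => rfl
  | succ m hm ih =>
    rw [sigmaFilt_succ_eq (by omega) (htrivial m hm m.lt_succ_self),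
      ih fun k hk hkm => htrivial k hk (hkm.trans m.lt_succ_self)]

/-- If the complexified complement is aspherical (a `K(π,1)` space), then the
consistency filtration has no gap: `Σ_2 = Σ_3 = ⋯ = Σ_ℓ`. -/
theorem aspherical_implies_no_gap (ℓ n : ℕ)
    (α : Fin n → (Vsp ℓ →ₗ[ℝ] ℝ))
    (hα : ∀ i, α i ≠ 0)
    (hess : (⋂ i, (LinearMap.ker (α i) : Set (Vsp ℓ))) = {0})
    (haspherical : ∀ k : ℕ, 2 ≤ k → ∀ x₀ : MA α,
      Subsingleton (HomotopyGroup.Pi k (MA α) x₀)) :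
    ∀ m : ℕ, 2 ≤ m → m ≤ ℓ → SigmaFilt ℓ α m = SigmaFilt ℓ α 2 :=
  fun _ hm _ => aspherical_implies_no_gap_general α hm fun k hk _ => haspherical k hk
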